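/- arXiv:2302.10095 — 3 statements merged into one kernel-verified Lean document; each statement's English description precedes it below -/
import Mathlib

section
/- Suppose the array V_{ij} = (Y_i, Y_j, X_i, X_j, A_{ij}), 1 ≤ i,j ≤ 2n+1, is jointly exchangeable, and the network covariates satisfy the permutation-equivariance assumption. Then the sequence of triples ((Y_1, X_1, Ẑ_1), …, (Y_{2n+1}, X_{2n+1}, Ẑ_{2n+1})) is exchangeable. -/
/-! The sequence of triples is a fixed measurable function `F` of the array `V`, built from `ζ`.
Equivariance of `ζ` says that `F` applied to the relabelled array is almost surely the relabelled
sequence of triples, so pushing the equality of laws of the two arrays forward along `F` gives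
the claim. -/

open MeasureTheory

/-- If the array `V_{ij} = (Y_i, Y_j, X_i, X_j, A_{ij})` is jointly
exchangeable and the network covariates `Ẑ = ζ(A, X)` are permutation-equivariant, then
the triples `(Y_i, X_i, Ẑ_i)_{1 ≤ i ≤ 2n+1}` are exchangeable. -/
theorem network_triples_exchangeable
    {Ω : Type*} [MeasurableSpace Ω] (μ : Measure Ω) [IsProbabilityMeasure μ]
    (n d p : ℕ)
    (Y : Fin (2*n+1) → Ω → ℝ) (X : Fin (2*n+1) → Ω → (Fin d → ℝ))
    (A : Ω → Fin (2*n+1) → Fin (2*n+1) → ℝ)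
    (hY : ∀ i, Measurable (Y i)) (hX : ∀ i, Measurable (X i)) (hA : Measurable A)
    -- joint exchangeability of the array `V_{ij} = (Y_i, Y_j, X_i, X_j, A_{ij})`
    (hexch : ∀ σ : Equiv.Perm (Fin (2*n+1)),
      Measure.map (fun ω => fun i j : Fin (2*n+1) =>
          (Y (σ i) ω, Y (σ j) ω, X (σ i) ω, X (σ j) ω, A ω (σ i) (σ j))) μ
        = Measure.map (fun ω => fun i j : Fin (2*n+1) =>
          (Y i ω, Y j ω, X i ω, X j ω, A ω i j)) μ)
    -- network covariates and the permutation-equivariance assumption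
    (ζ : (Fin (2*n+1) → Fin (2*n+1) → ℝ) → (Fin (2*n+1) → Fin d → ℝ) →
      Fin (2*n+1) → Fin p → ℝ)
    (hζ : Measurable (Function.uncurry ζ))
    (Zhat : Fin (2*n+1) → Ω → Fin p → ℝ)
    (hZhat : ∀ i ω, Zhat i ω = ζ (A ω) (fun l => X l ω) i)
    (hequiv : ∀ σ : Equiv.Perm (Fin (2*n+1)), ∀ᵐ ω ∂μ,
      (fun i => Zhat (σ i) ω)
        = ζ (fun i j => A ω (σ i) (σ j)) (fun i => X (σ i) ω)) :
    ∀ σ : Equiv.Perm (Fin (2*n+1)),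
      Measure.map (fun ω => fun i => (Y (σ i) ω, X (σ i) ω, Zhat (σ i) ω)) μ
        = Measure.map (fun ω => fun i => (Y i ω, X i ω, Zhat i ω)) μ := by
  intro σ
  -- `F` rebuilds all triples from the array, reading `Y_i, X_i` off the diagonal entry `V_{ii}`.
  let F : (Fin (2*n+1) → Fin (2*n+1) → ℝ × ℝ × (Fin d → ℝ) × (Fin d → ℝ) × ℝ) →
      Fin (2*n+1) → ℝ × (Fin d → ℝ) × (Fin p → ℝ) := fun v i =>
    ((v i i).1, (v i i).2.2.1,
      Function.uncurry ζ (fun k l => (v k l).2.2.2.2, fun l => (v l l).2.2.1) i)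
  have hF : Measurable F := by
    refine measurable_pi_lambda _ fun i => ?_
    refine Measurable.prodMk (by fun_prop) (Measurable.prodMk (by fun_prop) ?_)
    refine (measurable_pi_apply i).comp (hζ.comp (Measurable.prodMk ?_ ?_)) <;> fun_prop
  have hmap := congrArg (Measure.map F) (hexch σ)
  rw [Measure.map_map hF (by fun_prop), Measure.map_map hF (by fun_prop)] at hmap
  have hid : (fun ω => fun i => (Y i ω, X i ω, Zhat i ω))
      = F ∘ fun ω => fun i j : Fin (2*n+1) => (Y i ω, Y j ω, X i ω, X j ω, A ω i j) := by
    funext ω i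
    simp [F, hZhat]
  rw [hid]
  refine Eq.trans (Measure.map_congr ?_) hmap
  -- By equivariance, `F` of the relabelled array is a.s. the relabelled sequence of triples.
  filter_upwards [hequiv σ] with ω hω
  funext i
  have hi := congrFun hω i
  simp [F, hi]
end

section
/- Suppose the array V_{ij} = (Y_i, Y_j, X_i, X_j, A_{ij}), 1 ≤ i,j ≤ 2n+1, is jointly exchangeable and the network covariates satisfy the permutation-equivariance assumption. Fix α ∈ (0,1). Then the split conformal prediction set satisfies P(Y_{2n+1} ∈ Ĉ) ≥ 1 − α. -/
/-!
Write `J` for the `n + 1` calibration and test indices, `k = ⌈(1 - α)(n + 1)⌉`, and `S i` for the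
score of node `i`. A permutation `σ` fixing every training index leaves the training fold unchanged,
so by equivariance of `ζ` relabelling the raw data `(Y, X, A)` by `σ` turns the score of `i` into
that of `σ i` almost surely. Joint exchangeability, applied to the transposition of `j ∈ J` with the
test index, then shows that the events `E j = {#{i ∈ J | S i < S j} < k}`, `j ∈ J`, all have the same
probability (`measure_lowRank_eq`).

For any real values on `J`, at least `k ≤ n + 1` of the indices have fewer than `k` values strictly
below theirs (`le_card_lowRank`). Integrating this bound gives `k ≤ (n + 1) P(E test)`, hence
`P(E test) ≥ 1 - α`. Finally, on `E test` the test score is at most the `k`-th smallest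
calibration score (`le_kthSmallest`).
-/

open MeasureTheory

/-- The `k`-th smallest value (1-indexed) among `S 0, …, S (m-1)`. -/
noncomputable def kthSmallest {m : ℕ} (S : Fin m → ℝ) (k : ℕ) : ℝ :=
  ((Finset.univ.val.map S).sort (· ≤ ·)).getD (k - 1) 0

/-- Index of the `i`-th training point (`i = 1, …, n`) among the `2n+1` nodes. -/
def trainIdx (n : ℕ) (i : Fin n) : Fin (2*n+1) := ⟨i.val, by have := i.isLt; omega⟩

/-- Index of the `i`-th calibration point (`i = n+1, …, 2n`) among the `2n+1` nodes. -/
def calIdx (n : ℕ) (i : Fin n) : Fin (2*n+1) := ⟨n + i.val, by have := i.isLt; omega⟩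

/-- Index of the test point (`2n+1`) among the `2n+1` nodes. -/
def testIdx (n : ℕ) : Fin (2*n+1) := ⟨2*n, by omega⟩

/-- If fewer than `k` of the values `S i` are strictly below `t`, then `t` is at most the `k`-th
smallest of them. -/
lemma le_kthSmallest {m : ℕ} (S : Fin m → ℝ) (k : ℕ) (hk : 1 ≤ k) (hkm : k ≤ m) (t : ℝ)
    (h : (Finset.univ.filter fun i => S i < t).card < k) : t ≤ kthSmallest S k := by
  by_contra! hlt
  unfold kthSmallest at hlt
  set L := (Finset.univ.val.map S).sort (· ≤ ·) with hL
  have hlen : L.length = m := by simp [hL]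
  have hsorted : L.Pairwise (· ≤ ·) := Multiset.pairwise_sort _ _
  rw [List.getD_eq_getElem _ _ (by omega)] at hlt
  have hcount : L.countP (fun x => decide (x < t)) = (Finset.univ.filter fun i => S i < t).card := by
    rw [← Multiset.coe_countP, hL, Multiset.sort_eq, Multiset.countP_map]
    rfl
  -- the first `k` entries of the sorted list are all below `t`
  have htake : (L.take k).countP (fun x => decide (x < t)) = k := by
    have hlk : (L.take k).length = k := by simp; omega
    conv_rhs => rw [← hlk]
    rw [List.countP_eq_length]
    intro a ha
    obtain ⟨i, hi, rfl⟩ := List.getElem_of_mem ha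
    have hik : i < k := by omega
    rw [List.getElem_take]
    refine decide_eq_true (lt_of_le_of_lt ?_ hlt)
    rcases Nat.lt_or_ge i (k - 1) with h1 | h1
    · exact List.pairwise_iff_getElem.1 hsorted _ _ _ _ h1
    · have : i = k - 1 := by omega
      subst this
      exact le_rfl
  have := (List.take_sublist k L).countP_le (p := fun x => decide (x < t))
  omega

/-- At least `k` elements `j` of a finite set with at least `k` elements have fewer than `k` values
strictly below `S j`: among the other elements, one with minimal value has at least `k` values
strictly below its own, and by minimality all of these come from elements of the desired kind. -/
lemma le_card_lowRank {ι : Type*} (J : Finset ι) (S : ι → ℝ) (k : ℕ) (hk : k ≤ J.card) :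
    k ≤ (J.filter fun j => (J.filter fun i => S i < S j).card < k).card := by
  by_cases hB : (J.filter fun j => k ≤ (J.filter fun i => S i < S j).card).Nonempty
  · obtain ⟨j, hj, hmin⟩ := Finset.exists_min_image _ S hB
    rw [Finset.mem_filter] at hj
    refine hj.2.trans (Finset.card_le_card fun i hi => ?_)
    rw [Finset.mem_filter] at hi ⊢
    refine ⟨hi.1, ?_⟩
    by_contra! hge
    exact absurd hi.2 (not_lt.2 (hmin i (Finset.mem_filter.2 ⟨hi.1, hge⟩)))
  · rw [Finset.filter_true_of_mem]
    · exact hk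
    · intro j hj
      by_contra! hge
      exact hB ⟨j, Finset.mem_filter.2 ⟨hj, hge⟩⟩

/-- The score of node `i` as a function of the raw data `q = (Y, X, A)`, with `Ẑ = ζ(A, X)`. -/
def rawScore {n d p : ℕ}
    (ζ : (Fin (2*n+1) → Fin (2*n+1) → ℝ) → (Fin (2*n+1) → Fin d → ℝ) →
      Fin (2*n+1) → Fin p → ℝ)
    (s : ℝ → (Fin d → ℝ) → (Fin p → ℝ) →
      (Fin n → ℝ × (Fin d → ℝ) × (Fin p → ℝ)) → ℝ)
    (q : (Fin (2*n+1) → ℝ) × (Fin (2*n+1) → Fin d → ℝ) × (Fin (2*n+1) → Fin (2*n+1) → ℝ))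
    (i : Fin (2*n+1)) : ℝ :=
  s (q.1 i) (q.2.1 i) (ζ q.2.2 q.2.1 i)
    (fun k => (q.1 (trainIdx n k), q.2.1 (trainIdx n k), ζ q.2.2 q.2.1 (trainIdx n k)))

lemma measurable_rawScore {n d p : ℕ}
    {ζ : (Fin (2*n+1) → Fin (2*n+1) → ℝ) → (Fin (2*n+1) → Fin d → ℝ) →
      Fin (2*n+1) → Fin p → ℝ}
    (hζ : Measurable (Function.uncurry ζ))
    {s : ℝ → (Fin d → ℝ) → (Fin p → ℝ) →
      (Fin n → ℝ × (Fin d → ℝ) × (Fin p → ℝ)) → ℝ}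
    (hs : Measurable fun q : ℝ × (Fin d → ℝ) × (Fin p → ℝ) ×
        (Fin n → ℝ × (Fin d → ℝ) × (Fin p → ℝ)) => s q.1 q.2.1 q.2.2.1 q.2.2.2)
    (i : Fin (2*n+1)) : Measurable fun q => rawScore ζ s q i := by
  have hy : ∀ j, Measurable fun q : (Fin (2*n+1) → ℝ) × (Fin (2*n+1) → Fin d → ℝ) ×
      (Fin (2*n+1) → Fin (2*n+1) → ℝ) => q.1 j :=
    fun j => (measurable_pi_apply j).comp measurable_fst
  have hx : ∀ j, Measurable fun q : (Fin (2*n+1) → ℝ) × (Fin (2*n+1) → Fin d → ℝ) ×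
      (Fin (2*n+1) → Fin (2*n+1) → ℝ) => q.2.1 j :=
    fun j => (measurable_pi_apply j).comp (measurable_fst.comp measurable_snd)
  have hz : ∀ j, Measurable fun q : (Fin (2*n+1) → ℝ) × (Fin (2*n+1) → Fin d → ℝ) ×
      (Fin (2*n+1) → Fin (2*n+1) → ℝ) => ζ q.2.2 q.2.1 j := fun j =>
    (measurable_pi_apply j).comp
      (hζ.comp ((measurable_snd.comp measurable_snd).prodMk (measurable_fst.comp measurable_snd)))
  exact hs.comp ((hy i).prodMk ((hx i).prodMk ((hz i).prodMk
    (measurable_pi_lambda _ fun k => (hy _).prodMk ((hx _).prodMk (hz _))))))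

/-- The data sets for which fewer than `k` of the scores indexed by `J` lie strictly below the
`j`-th score form a measurable set. -/
lemma measurableSet_lowRank {E ι : Type*} [MeasurableSpace E] (J : Finset ι) (f : E → ι → ℝ)
    (hf : ∀ i, Measurable fun e => f e i) (j : ι) (k : ℕ) :
    MeasurableSet {e | (J.filter fun i => f e i < f e j).card < k} := by
  simp only [Finset.card_filter]
  refine measurableSet_lt (Finset.measurable_sum _ fun i _ => ?_) measurable_const
  exact Measurable.ite (measurableSet_lt (hf i) (hf j)) measurable_const measurable_const

/-- Exchangeability of the low-rank events: let `D` be random data with scores `f (D ω) i`, and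
suppose that `D'` has the same law as `D` and scores permuted by `σ`, almost surely. If `σ` maps `J`
onto itself, then `σ t` is as likely as `t` to have fewer than `k` scores from `J` strictly below
its own. -/
lemma measure_lowRank_eq {Ω E ι : Type*} [MeasurableSpace Ω] [MeasurableSpace E] (μ : Measure Ω)
    (J : Finset ι) (f : E → ι → ℝ) (hf : ∀ i, Measurable fun e => f e i) (k : ℕ)
    (D D' : Ω → E) (hD : Measurable D) (hD' : Measurable D') (hlaw : μ.map D' = μ.map D)
    (σ : Equiv.Perm ι) (hσ : ∀ i, σ i ∈ J ↔ i ∈ J)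
    (hperm : ∀ᵐ ω ∂μ, ∀ i, f (D' ω) i = f (D ω) (σ i)) (t : ι) :
    μ {ω | (J.filter fun i => f (D ω) i < f (D ω) (σ t)).card < k}
      = μ {ω | (J.filter fun i => f (D ω) i < f (D ω) t).card < k} := by
  have hB := measurableSet_lowRank J f hf t k
  have h1 : μ {ω | (J.filter fun i => f (D ω) i < f (D ω) t).card < k}
      = μ {ω | (J.filter fun i => f (D' ω) i < f (D' ω) t).card < k} := by
    have := congrArg (fun ν => ν {e | (J.filter fun i => f e i < f e t).card < k}) hlaw
    simp only [Measure.map_apply hD hB, Measure.map_apply hD' hB] at this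
    exact this.symm
  rw [h1]
  refine measure_congr ?_
  filter_upwards [hperm] with ω hω
  have hcard : (J.filter fun i => f (D' ω) i < f (D' ω) t).card
      = (J.filter fun i => f (D ω) i < f (D ω) (σ t)).card := by
    refine Finset.card_equiv σ fun i => ?_
    simp only [Finset.mem_filter, hσ, hω]
  exact propext (by change _ < k ↔ _ < k; rw [hcard])

/-- Averaging: if the low-rank events at all indices of `J` have the same probability as the one at
`t`, then `k ≤ |J| · P(low rank at t)`. -/
lemma le_card_mul_measure_lowRank {Ω ι : Type*} [MeasurableSpace Ω] (μ : Measure Ω)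
    [IsProbabilityMeasure μ] (J : Finset ι) (S : Ω → ι → ℝ) (hS : ∀ i, Measurable fun ω => S ω i)
    (k : ℕ) (hk : k ≤ J.card) (t : ι)
    (heq : ∀ j ∈ J, μ {ω | (J.filter fun i => S ω i < S ω j).card < k}
      = μ {ω | (J.filter fun i => S ω i < S ω t).card < k}) :
    (k : ENNReal) ≤ J.card * μ {ω | (J.filter fun i => S ω i < S ω t).card < k} := by
  calc (k : ENNReal) = ∫⁻ _, (k : ENNReal) ∂μ := by simp
    _ ≤ ∫⁻ ω, ∑ j ∈ J, {ω | (J.filter fun i => S ω i < S ω j).card < k}.indicator 1 ω ∂μ := by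
        refine lintegral_mono fun ω => ?_
        have := le_card_lowRank J (S ω) k hk
        rw [Finset.card_filter] at this
        calc (k : ENNReal) ≤ ((∑ j ∈ J, if (J.filter fun i => S ω i < S ω j).card < k
                then 1 else 0 : ℕ) : ENNReal) := by exact_mod_cast this
          _ = _ := by
            push_cast
            refine Finset.sum_congr rfl fun j _ => ?_
            simp [Set.indicator_apply]
    _ = ∑ j ∈ J, μ {ω | (J.filter fun i => S ω i < S ω j).card < k} := by
        have hm := fun j => measurableSet_lowRank J S hS j k
        rw [lintegral_finsetSum _ fun j _ => measurable_one.indicator (hm j)]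
        exact Finset.sum_congr rfl fun j _ => lintegral_indicator_one (hm j)
    _ = _ := by rw [Finset.sum_congr rfl heq, Finset.sum_const, nsmul_eq_mul]

/-- **validity of split conformal prediction for network regression.**
If the array `V_{ij} = (Y_i, Y_j, X_i, X_j, A_{ij})` is jointly exchangeable and the
network covariates `Ẑ = ζ(A, X)` are permutation-equivariant, then the split conformal
prediction set at level `α` satisfies `P(Y_{2n+1} ∈ Ĉ) ≥ 1 − α`.  The event
`Y_{2n+1} ∈ Ĉ` is the event that the test score is at most the
`⌈(1−α)(n+1)⌉`-th smallest calibration score (`+∞` if `⌈(1−α)(n+1)⌉ > n`). -/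
theorem split_conformal_network_validity
    {Ω : Type*} [MeasurableSpace Ω] (μ : Measure Ω) [IsProbabilityMeasure μ]
    (n d p : ℕ)
    (Y : Fin (2*n+1) → Ω → ℝ) (X : Fin (2*n+1) → Ω → (Fin d → ℝ))
    (A : Ω → Fin (2*n+1) → Fin (2*n+1) → ℝ)
    (hY : ∀ i, Measurable (Y i)) (hX : ∀ i, Measurable (X i)) (hA : Measurable A)
    -- joint exchangeability of the array `V_{ij}`
    (hexch : ∀ σ : Equiv.Perm (Fin (2*n+1)),
      Measure.map (fun ω => fun i j : Fin (2*n+1) =>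
          (Y (σ i) ω, Y (σ j) ω, X (σ i) ω, X (σ j) ω, A ω (σ i) (σ j))) μ
        = Measure.map (fun ω => fun i j : Fin (2*n+1) =>
          (Y i ω, Y j ω, X i ω, X j ω, A ω i j)) μ)
    -- network covariates and the permutation-equivariance assumption
    (ζ : (Fin (2*n+1) → Fin (2*n+1) → ℝ) → (Fin (2*n+1) → Fin d → ℝ) →
      Fin (2*n+1) → Fin p → ℝ)
    (hζ : Measurable (Function.uncurry ζ))
    (Zhat : Fin (2*n+1) → Ω → Fin p → ℝ)
    (hZhat : ∀ i ω, Zhat i ω = ζ (A ω) (fun l => X l ω) i)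
    (hequiv : ∀ σ : Equiv.Perm (Fin (2*n+1)), ∀ᵐ ω ∂μ,
      (fun i => Zhat (σ i) ω)
        = ζ (fun i j => A ω (σ i) (σ j)) (fun i => X (σ i) ω))
    -- nonneg measurable nonconformity score, depending on the training fold `𝒟₁`
    (s : ℝ → (Fin d → ℝ) → (Fin p → ℝ) →
      (Fin n → ℝ × (Fin d → ℝ) × (Fin p → ℝ)) → ℝ)
    (hs : Measurable fun q : ℝ × (Fin d → ℝ) × (Fin p → ℝ) ×
        (Fin n → ℝ × (Fin d → ℝ) × (Fin p → ℝ)) => s q.1 q.2.1 q.2.2.1 q.2.2.2)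
    (hs0 : ∀ y x z D, 0 ≤ s y x z D)
    (α : ℝ) (hα : α ∈ Set.Ioo (0:ℝ) 1) :
    ENNReal.ofReal (1 - α) ≤
      μ {ω | ((s (Y (testIdx n) ω) (X (testIdx n) ω) (Zhat (testIdx n) ω)
              (fun i : Fin n => (Y (trainIdx n i) ω, X (trainIdx n i) ω,
                Zhat (trainIdx n i) ω)) : ℝ) : EReal) ≤
          (if ⌈(1 - α) * (n + 1)⌉₊ ≤ n
            then ((kthSmallest (fun i : Fin n =>
                s (Y (calIdx n i) ω) (X (calIdx n i) ω) (Zhat (calIdx n i) ω)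
                  (fun i' : Fin n => (Y (trainIdx n i') ω, X (trainIdx n i') ω,
                    Zhat (trainIdx n i') ω))) ⌈(1 - α) * (n + 1)⌉₊ : ℝ) : EReal)
            else (⊤ : EReal))} := by
  classical
  set k := ⌈(1 - α) * (n + 1)⌉₊ with hk
  have hα0 := hα.1
  have hα1 := hα.2
  have hn0 : (0 : ℝ) ≤ n := Nat.cast_nonneg n
  have hk1 : 1 ≤ k := Nat.one_le_ceil_iff.2 (by nlinarith)
  have hkn : k ≤ n + 1 := by
    rw [hk, Nat.ceil_le]
    push_cast
    nlinarith
  let J : Finset (Fin (2*n+1)) := Finset.Ici ⟨n, by omega⟩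
  have hJmem : ∀ i : Fin (2*n+1), i ∈ J ↔ n ≤ i.val := fun i => by
    simp [J, Fin.le_def]
  have hJ : J.card = n + 1 := by
    simp only [J, Fin.card_Ici]
    omega
  have htJ : testIdx n ∈ J := (hJmem _).2 (by simp [testIdx]; omega)
  -- the raw data relabelled by `σ`
  let D : Equiv.Perm (Fin (2*n+1)) → Ω → (Fin (2*n+1) → ℝ) × (Fin (2*n+1) → Fin d → ℝ) ×
      (Fin (2*n+1) → Fin (2*n+1) → ℝ) := fun σ ω =>
    (fun i => Y (σ i) ω, fun i => X (σ i) ω, fun i j => A ω (σ i) (σ j))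
  have hAij : ∀ i j, Measurable fun ω => A ω i j := fun i j =>
    (measurable_pi_apply j).comp ((measurable_pi_apply i).comp hA)
  have hD : ∀ σ, Measurable (D σ) := fun σ =>
    (measurable_pi_lambda _ fun i => hY _).prodMk
      ((measurable_pi_lambda _ fun i => hX _).prodMk
        (measurable_pi_lambda _ fun i => measurable_pi_lambda _ fun j => hAij _ _))
  have hlaw : ∀ σ, μ.map (D σ) = μ.map (D 1) := by
    intro σ
    -- the raw data are read off the array `V`, through its diagonal for `Y` and `X`
    let g : (Fin (2*n+1) → Fin (2*n+1) → ℝ × ℝ × (Fin d → ℝ) × (Fin d → ℝ) × ℝ) →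
        (Fin (2*n+1) → ℝ) × (Fin (2*n+1) → Fin d → ℝ) × (Fin (2*n+1) → Fin (2*n+1) → ℝ) :=
      fun V => (fun i => (V i i).1, fun i => (V i i).2.2.1, fun i j => (V i j).2.2.2.2)
    have hg : Measurable g := by
      have hV : ∀ i j, Measurable fun V : Fin (2*n+1) → Fin (2*n+1) →
          ℝ × ℝ × (Fin d → ℝ) × (Fin d → ℝ) × ℝ => V i j := fun i j =>
        (measurable_pi_apply j).comp (measurable_pi_apply i)
      exact (measurable_pi_lambda _ fun i => (hV i i).fst).prodMk
        ((measurable_pi_lambda _ fun i => (hV i i).snd.snd.fst).prodMk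
          (measurable_pi_lambda _ fun i => measurable_pi_lambda _ fun j =>
            (hV i j).snd.snd.snd.snd))
    have hV : ∀ τ : Equiv.Perm (Fin (2*n+1)), Measurable (fun ω => fun i j : Fin (2*n+1) =>
        (Y (τ i) ω, Y (τ j) ω, X (τ i) ω, X (τ j) ω, A ω (τ i) (τ j))) := fun τ =>
      measurable_pi_lambda _ fun i => measurable_pi_lambda _ fun j =>
        (hY _).prodMk ((hY _).prodMk ((hX _).prodMk ((hX _).prodMk (hAij _ _))))
    have h := congrArg (fun ν => ν.map g) (hexch σ)
    exact (Measure.map_map hg (hV σ)).symm.trans (h.trans (Measure.map_map hg (hV 1)))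
  have hf := measurable_rawScore hζ hs
  have heq : ∀ j ∈ J,
      μ {ω | (J.filter fun i => rawScore ζ s (D 1 ω) i < rawScore ζ s (D 1 ω) j).card < k}
      = μ {ω | (J.filter fun i => rawScore ζ s (D 1 ω) i
          < rawScore ζ s (D 1 ω) (testIdx n)).card < k} := by
    intro j hj
    let σ := Equiv.swap j (testIdx n)
    have hσJ : ∀ i, σ i ∈ J ↔ i ∈ J := by
      intro i
      simp only [σ, Equiv.swap_apply_def]
      split_ifs with h1 h2
      · subst h1; simp [hj, htJ]
      · subst h2; simp [hj, htJ]
      · rfl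
    have hσtrain : ∀ i, σ (trainIdx n i) = trainIdx n i := by
      intro i
      have hi : trainIdx n i ∉ J := by
        rw [hJmem]
        have := i.isLt
        simp [trainIdx]
      exact Equiv.swap_apply_of_ne_of_ne (fun h => hi (h ▸ hj)) (fun h => hi (h ▸ htJ))
    have hperm : ∀ᵐ ω ∂μ, ∀ i, rawScore ζ s (D σ ω) i = rawScore ζ s (D 1 ω) (σ i) := by
      filter_upwards [hequiv σ] with ω hω i
      have hz : ∀ l, ζ (fun i j => A ω (σ i) (σ j)) (fun i => X (σ i) ω) l
          = ζ (A ω) (fun l => X l ω) (σ l) := fun l => by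
        rw [← hZhat, ← congrFun hω l]
      simp only [rawScore, D, hz, hσtrain]
      rfl
    have := measure_lowRank_eq μ J (rawScore ζ s) hf k (D 1) (D σ) (hD 1) (hD σ) (hlaw σ) σ
      hσJ hperm (testIdx n)
    simpa [σ] using this
  have hmain := le_card_mul_measure_lowRank μ J (fun ω => rawScore ζ s (D 1 ω))
    (fun i => (hf i).comp (hD 1)) k (by omega) (testIdx n) heq
  have hbound : ENNReal.ofReal (1 - α) ≤ μ {ω | (J.filter fun i => rawScore ζ s (D 1 ω) i
      < rawScore ζ s (D 1 ω) (testIdx n)).card < k} := by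
    rw [hJ] at hmain
    have h1 : ((n + 1 : ℕ) : ENNReal) * ENNReal.ofReal (1 - α) ≤ (k : ENNReal) := by
      rw [← ENNReal.ofReal_natCast, ← ENNReal.ofReal_natCast (n := k),
        ← ENNReal.ofReal_mul (by positivity)]
      refine ENNReal.ofReal_le_ofReal ?_
      have := Nat.le_ceil ((1 - α) * ((n : ℝ) + 1))
      push_cast
      rw [mul_comm]
      exact this
    exact (ENNReal.mul_le_mul_iff_right (by simp) (ENNReal.natCast_ne_top _)).1 (h1.trans hmain)
  refine hbound.trans (measure_mono fun ω hω => ?_)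
  simp only [Set.mem_ofPred_eq] at hω ⊢
  split_ifs with hkle
  · rw [EReal.coe_le_coe_iff]
    simp only [hZhat]
    refine le_kthSmallest _ k hk1 hkle _ (lt_of_le_of_lt ?_ hω)
    refine Finset.card_le_card_of_injOn (calIdx n) ?_ ?_
    · intro i hi
      simp only [Finset.coe_filter, Finset.mem_univ, true_and, Set.mem_ofPred_eq] at hi ⊢
      exact ⟨(hJmem _).2 (by simp [calIdx]), hi⟩
    · intro i _ j _ hij
      have := congrArg Fin.val hij
      simp only [calIdx] at this
      exact Fin.ext (by omega)
  · exact le_top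
end

section
/- Under the hypotheses of the split conformal validity theorem (joint exchangeability of the array V_{ij} = (Y_i, Y_j, X_i, X_j, A_{ij}) and permutation-equivariance of the network covariates), if in addition the nonconformity scores S_{n+1}, …, S_{2n+1} (where S_{2n+1} = s(Y_{2n+1}, X_{2n+1}, Ẑ_{2n+1}; 𝒟₁)) are almost surely pairwise distinct, then 1 − α ≤ P(Y_{2n+1} ∈ Ĉ) ≤ 1 − α + 1/(n+1). -/
/-!
Write `k = ⌈(1 - α)(n + 1)⌉`. The test score is at most the `k`-th smallest calibration score exactly
when fewer than `k` of the `n + 1` scores lie strictly below it (`le_kthSmallest_iff`); when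
`k = n + 1` both conditions always hold. So the coverage event says that the test score has rank
(counted from zero) less than `k`.

The scores are a fixed measurable function `scoreOfArray` of the exchangeable array `V`, and by
equivariance of `ζ`, swapping a calibration node with the test node in `V` swaps the corresponding
scores, up to a null set, while the training fold is untouched. Hence the events
"score `j` has rank less than `k`" all have the same probability. As the scores are almost surely
distinct, their ranks are a permutation of `0, …, n`, so almost surely exactly `k` of these events
occur (`card_rank_lt`). Summing over `j`, the coverage is exactly `k / (n + 1)`, which lies between
`1 - α` and `1 - α + 1 / (n + 1)`.
-/

open MeasureTheory

/-- In a weakly increasing list, the entry at (zero-based) position `m` is at least `x` iff at most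
`m` entries lie strictly below `x`. -/
lemma le_getD_iff_countP {x : ℝ} : ∀ {L : List ℝ} {m : ℕ}, L.Pairwise (· ≤ ·) → m < L.length →
    (x ≤ L.getD m 0 ↔ L.countP (· < x) ≤ m)
  | [], m, _, hm => by simp at hm
  | a :: l, m, hL, hm => by
    rw [List.pairwise_cons] at hL
    by_cases hax : a < x
    · cases m with
      | zero => simp [hax]
      | succ m =>
        have := le_getD_iff_countP (x := x) hL.2 (m := m) (by simpa using hm)
        rw [List.countP_cons_of_pos (by simpa using hax), List.getD_cons_succ, this]
        omega
    -- otherwise every entry is at least `a ≥ x`, so both sides hold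
    · have hall : ∀ b ∈ a :: l, x ≤ b := by
        intro b hb
        rcases List.mem_cons.1 hb with rfl | hb
        · exact not_lt.1 hax
        · exact (not_lt.1 hax).trans (hL.1 b hb)
      have h0 : (a :: l).countP (· < x) = 0 := by
        rw [List.countP_eq_zero]
        intro b hb
        simpa using hall b hb
      rw [h0, List.getD_eq_getElem _ _ hm]
      simp only [Nat.zero_le, iff_true]
      exact hall _ (List.getElem_mem hm)

lemma le_kthSmallest_iff {m : ℕ} (S : Fin m → ℝ) {k : ℕ} (hk : 1 ≤ k) (hkm : k ≤ m) (x : ℝ) :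
    x ≤ kthSmallest S k ↔ (Finset.univ.filter fun i => S i < x).card < k := by
  have hcount : ((Finset.univ.val.map S).sort (· ≤ ·)).countP (· < x)
      = (Finset.univ.filter fun i => S i < x).card := by
    rw [← Multiset.coe_countP, Multiset.sort_eq, Multiset.countP_map]
    rfl
  rw [kthSmallest, le_getD_iff_countP (Multiset.pairwise_sort _ _) (by simp; omega), hcount]
  omega

/-- The number of values of `f` strictly below `f j`: the rank of `f j`, counted from zero. -/
noncomputable def rankBelow {m : ℕ} (f : Fin m → ℝ) (j : Fin m) : ℕ :=
  (Finset.univ.filter fun i => f i < f j).card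

lemma rankBelow_lt {m : ℕ} (f : Fin m → ℝ) (j : Fin m) : rankBelow f j < m := by
  have : (Finset.univ.filter fun i => f i < f j) ⊂ Finset.univ := by
    rw [Finset.filter_ssubset]
    exact ⟨j, Finset.mem_univ _, lt_irrefl _⟩
  simpa [rankBelow] using Finset.card_lt_card this

lemma rankBelow_comp_perm {m : ℕ} (f : Fin m → ℝ) (τ : Equiv.Perm (Fin m)) (j : Fin m) :
    rankBelow (f ∘ τ) j = rankBelow f (τ j) := by
  unfold rankBelow
  refine Finset.card_bij (fun i _ => τ i) ?_ ?_ ?_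
  · intro i hi
    simpa using hi
  · intro a _ b _ h
    exact τ.injective h
  · intro b hb
    exact ⟨τ.symm b, by simpa using hb, by simp⟩

lemma rankBelow_strictMono {m : ℕ} (f : Fin m → ℝ) {a b : Fin m} (h : f a < f b) :
    rankBelow f a < rankBelow f b := by
  refine Finset.card_lt_card (Finset.ssubset_iff_subset_ne.2 ⟨?_, ?_⟩)
  · intro i hi
    simp only [Finset.mem_filter, Finset.mem_univ, true_and] at hi ⊢
    exact hi.trans h
  · intro he
    have : a ∈ Finset.univ.filter fun i => f i < f b := by simpa using h
    rw [← he] at this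
    simp at this

/-- The ranks of distinct values are a permutation of `0, …, m - 1`, so exactly `k` of them are
less than `k`. -/
lemma card_rank_lt {m : ℕ} {f : Fin m → ℝ} (hf : Function.Injective f) {k : ℕ} (hk : k ≤ m) :
    (Finset.univ.filter fun j => rankBelow f j < k).card = k := by
  let r : Fin m → Fin m := fun j => ⟨rankBelow f j, rankBelow_lt f j⟩
  have hr : Function.Bijective r := by
    refine Finite.injective_iff_bijective.1 fun a b hab => ?_
    have hab' : rankBelow f a = rankBelow f b := congrArg Fin.val hab
    rcases lt_trichotomy (f a) (f b) with h | h | h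
    · exact absurd hab' (rankBelow_strictMono f h).ne
    · exact hf h
    · exact absurd hab' (rankBelow_strictMono f h).ne'
  calc (Finset.univ.filter fun j => rankBelow f j < k).card
      = (Finset.univ.filter fun i : Fin m => i.val < k).card := by
        refine Finset.card_bij (fun j _ => r j) ?_ ?_ ?_
        · intro i hi
          simpa [r] using hi
        · intro a _ b _ h
          exact hr.1 h
        · intro b hb
          obtain ⟨a, rfl⟩ := hr.2 b
          exact ⟨a, by simpa [r] using hb, rfl⟩
    _ = k := by
        rw [Fin.card_filter_val_lt]
        omega

lemma measurableSet_rankBelow_lt {m : ℕ} (k : ℕ) (j : Fin m) :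
    MeasurableSet {f : Fin m → ℝ | rankBelow f j < k} := by
  have hm : Measurable fun f : Fin m → ℝ => rankBelow f j := by
    have : (fun f : Fin m → ℝ => rankBelow f j)
        = fun f => ∑ i, if f i < f j then 1 else 0 := by
      funext f
      rw [rankBelow, Finset.card_filter]
    rw [this]
    refine Finset.measurable_sum _ fun i _ => ?_
    exact Measurable.ite (measurableSet_lt (measurable_pi_apply i) (measurable_pi_apply j))
      measurable_const measurable_const
  exact measurableSet_lt hm measurable_const

/-- Index of the node carrying the `j`-th score: the calibration points, then the test point. -/
def scoreIdx (n : ℕ) (j : Fin (n+1)) : Fin (2*n+1) := ⟨n + j.val, by have := j.isLt; omega⟩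

lemma scoreIdx_castSucc (n : ℕ) (i : Fin n) : scoreIdx n i.castSucc = calIdx n i := rfl

lemma scoreIdx_last (n : ℕ) : scoreIdx n (Fin.last n) = testIdx n := by
  simp [scoreIdx, testIdx, two_mul]

lemma scoreIdx_injective (n : ℕ) : Function.Injective (scoreIdx n) := by
  intro a b h
  simpa [scoreIdx, Fin.ext_iff] using h

lemma trainIdx_ne_scoreIdx (n : ℕ) (i : Fin n) (j : Fin (n+1)) : trainIdx n i ≠ scoreIdx n j := by
  intro h
  have := i.isLt
  simp only [trainIdx, scoreIdx, Fin.mk.injEq] at h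
  omega

/-- The scores as a function of the array `v i j = (Y i, Y j, X i, X j, A i j)`: the response
and covariate of node `i` are read off the diagonal entry `v i i`. -/
def scoreOfArray {n d p : ℕ}
    (ζ : (Fin (2*n+1) → Fin (2*n+1) → ℝ) → (Fin (2*n+1) → Fin d → ℝ) →
      Fin (2*n+1) → Fin p → ℝ)
    (s : ℝ → (Fin d → ℝ) → (Fin p → ℝ) →
      (Fin n → ℝ × (Fin d → ℝ) × (Fin p → ℝ)) → ℝ)
    (v : Fin (2*n+1) → Fin (2*n+1) → ℝ × ℝ × (Fin d → ℝ) × (Fin d → ℝ) × ℝ)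
    (j : Fin (n+1)) : ℝ :=
  s (v (scoreIdx n j) (scoreIdx n j)).1 (v (scoreIdx n j) (scoreIdx n j)).2.2.1
    (ζ (fun a b => (v a b).2.2.2.2) (fun a => (v a a).2.2.1) (scoreIdx n j))
    (fun i => ((v (trainIdx n i) (trainIdx n i)).1, (v (trainIdx n i) (trainIdx n i)).2.2.1,
      ζ (fun a b => (v a b).2.2.2.2) (fun a => (v a a).2.2.1) (trainIdx n i)))

lemma measurable_scoreOfArray {n d p : ℕ}
    {ζ : (Fin (2*n+1) → Fin (2*n+1) → ℝ) → (Fin (2*n+1) → Fin d → ℝ) →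
      Fin (2*n+1) → Fin p → ℝ}
    (hζ : Measurable (Function.uncurry ζ))
    {s : ℝ → (Fin d → ℝ) → (Fin p → ℝ) →
      (Fin n → ℝ × (Fin d → ℝ) × (Fin p → ℝ)) → ℝ}
    (hs : Measurable fun q : ℝ × (Fin d → ℝ) × (Fin p → ℝ) ×
        (Fin n → ℝ × (Fin d → ℝ) × (Fin p → ℝ)) => s q.1 q.2.1 q.2.2.1 q.2.2.2) :
    Measurable (scoreOfArray ζ s) := by
  refine measurable_pi_lambda _ fun j => ?_
  have hev : ∀ a b, Measurable fun v : Fin (2*n+1) → Fin (2*n+1) →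
      ℝ × ℝ × (Fin d → ℝ) × (Fin d → ℝ) × ℝ => v a b := fun a b => by fun_prop
  have hz : ∀ l, Measurable fun v : Fin (2*n+1) → Fin (2*n+1) →
      ℝ × ℝ × (Fin d → ℝ) × (Fin d → ℝ) × ℝ =>
      ζ (fun a b => (v a b).2.2.2.2) (fun a => (v a a).2.2.1) l := by
    intro l
    have hin : Measurable fun v : Fin (2*n+1) → Fin (2*n+1) →
        ℝ × ℝ × (Fin d → ℝ) × (Fin d → ℝ) × ℝ =>
        ((fun a b => (v a b).2.2.2.2 : Fin (2*n+1) → Fin (2*n+1) → ℝ),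
          (fun a => (v a a).2.2.1 : Fin (2*n+1) → Fin d → ℝ)) := by
      refine Measurable.prodMk ?_ ?_
      · exact measurable_pi_lambda _ fun a => measurable_pi_lambda _ fun b =>
          (hev a b).snd.snd.snd.snd
      · exact measurable_pi_lambda _ fun a => (hev a a).snd.snd.fst
    exact (measurable_pi_apply l).comp (hζ.comp hin)
  exact hs.comp ((hev _ _).fst.prodMk ((hev _ _).snd.snd.fst.prodMk ((hz _).prodMk
    (measurable_pi_lambda _ fun i =>
      (hev _ _).fst.prodMk ((hev _ _).snd.snd.fst.prodMk (hz _))))))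

/-- Under the hypotheses of the split conformal validity theorem
(joint exchangeability of `V_{ij}` and permutation-equivariance of the network
covariates), if moreover the scores `S_{n+1}, …, S_{2n+1}` are a.s. pairwise distinct,
then `1 − α ≤ P(Y_{2n+1} ∈ Ĉ) ≤ 1 − α + 1/(n+1)`. -/
theorem split_conformal_network_two_sided
    {Ω : Type*} [MeasurableSpace Ω] (μ : Measure Ω) [IsProbabilityMeasure μ]
    (n d p : ℕ)
    (Y : Fin (2*n+1) → Ω → ℝ) (X : Fin (2*n+1) → Ω → (Fin d → ℝ))
    (A : Ω → Fin (2*n+1) → Fin (2*n+1) → ℝ)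
    (hY : ∀ i, Measurable (Y i)) (hX : ∀ i, Measurable (X i)) (hA : Measurable A)
    -- joint exchangeability of the array `V_{ij}`
    (hexch : ∀ σ : Equiv.Perm (Fin (2*n+1)),
      Measure.map (fun ω => fun i j : Fin (2*n+1) =>
          (Y (σ i) ω, Y (σ j) ω, X (σ i) ω, X (σ j) ω, A ω (σ i) (σ j))) μ
        = Measure.map (fun ω => fun i j : Fin (2*n+1) =>
          (Y i ω, Y j ω, X i ω, X j ω, A ω i j)) μ)
    -- network covariates and the permutation-equivariance assumption
    (ζ : (Fin (2*n+1) → Fin (2*n+1) → ℝ) → (Fin (2*n+1) → Fin d → ℝ) →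
      Fin (2*n+1) → Fin p → ℝ)
    (hζ : Measurable (Function.uncurry ζ))
    (Zhat : Fin (2*n+1) → Ω → Fin p → ℝ)
    (hZhat : ∀ i ω, Zhat i ω = ζ (A ω) (fun l => X l ω) i)
    (hequiv : ∀ σ : Equiv.Perm (Fin (2*n+1)), ∀ᵐ ω ∂μ,
      (fun i => Zhat (σ i) ω)
        = ζ (fun i j => A ω (σ i) (σ j)) (fun i => X (σ i) ω))
    -- nonneg measurable nonconformity score, depending on the training fold `𝒟₁`
    (s : ℝ → (Fin d → ℝ) → (Fin p → ℝ) →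
      (Fin n → ℝ × (Fin d → ℝ) × (Fin p → ℝ)) → ℝ)
    (hs : Measurable fun q : ℝ × (Fin d → ℝ) × (Fin p → ℝ) ×
        (Fin n → ℝ × (Fin d → ℝ) × (Fin p → ℝ)) => s q.1 q.2.1 q.2.2.1 q.2.2.2)
    (hs0 : ∀ y x z D, 0 ≤ s y x z D)
    (α : ℝ) (hα : α ∈ Set.Ioo (0:ℝ) 1)
    -- the scores `S_{n+1}, …, S_{2n}` and `S_{2n+1}`, written via a helper `Sc`
    (Sc : Fin (n+1) → Ω → ℝ)
    (hSc : ∀ ω, (∀ i : Fin n, Sc i.castSucc ω =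
        s (Y (calIdx n i) ω) (X (calIdx n i) ω) (Zhat (calIdx n i) ω)
          (fun i' : Fin n => (Y (trainIdx n i') ω, X (trainIdx n i') ω,
            Zhat (trainIdx n i') ω))) ∧
      Sc (Fin.last n) ω =
        s (Y (testIdx n) ω) (X (testIdx n) ω) (Zhat (testIdx n) ω)
          (fun i' : Fin n => (Y (trainIdx n i') ω, X (trainIdx n i') ω,
            Zhat (trainIdx n i') ω)))
    -- the scores are a.s. pairwise distinct
    (hdistinct : ∀ᵐ ω ∂μ, ∀ i j : Fin (n+1), i ≠ j → Sc i ω ≠ Sc j ω) :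
    ENNReal.ofReal (1 - α) ≤
      μ {ω | ((Sc (Fin.last n) ω : ℝ) : EReal) ≤
          (if ⌈(1 - α) * (n + 1)⌉₊ ≤ n
            then ((kthSmallest (fun i : Fin n => Sc i.castSucc ω)
                    ⌈(1 - α) * (n + 1)⌉₊ : ℝ) : EReal)
            else (⊤ : EReal))} ∧
    μ {ω | ((Sc (Fin.last n) ω : ℝ) : EReal) ≤
          (if ⌈(1 - α) * (n + 1)⌉₊ ≤ n
            then ((kthSmallest (fun i : Fin n => Sc i.castSucc ω)
                    ⌈(1 - α) * (n + 1)⌉₊ : ℝ) : EReal)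
            else (⊤ : EReal))}
      ≤ ENNReal.ofReal (1 - α + 1 / (n + 1)) := by
  set k : ℕ := ⌈(1 - α) * (n + 1)⌉₊ with hkdef
  have hn1 : (0 : ℝ) < n + 1 := by positivity
  have hα1 : 0 < 1 - α := by linarith [hα.2]
  have hk1 : 1 ≤ k := Nat.one_le_iff_ne_zero.2 (Nat.ceil_pos.2 (mul_pos hα1 hn1)).ne'
  have hkn : k ≤ n + 1 := by
    refine Nat.ceil_le.2 ?_
    push_cast
    nlinarith [hα.1]
  -- the coverage event is a statement about the rank of the test score
  have hset : {ω | ((Sc (Fin.last n) ω : ℝ) : EReal) ≤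
          (if k ≤ n then ((kthSmallest (fun i : Fin n => Sc i.castSucc ω) k : ℝ) : EReal)
            else (⊤ : EReal))}
      = {ω | rankBelow (fun j => Sc j ω) (Fin.last n) < k} := by
    ext ω
    simp only [Set.mem_ofPred_eq]
    split_ifs with h
    · rw [EReal.coe_le_coe_iff, le_kthSmallest_iff _ hk1 h, rankBelow, Finset.card_filter,
        Finset.card_filter, Fin.sum_univ_castSucc]
      simp
    · have := rankBelow_lt (fun j => Sc j ω) (Fin.last n)
      simp only [le_top, true_iff]
      omega
  rw [hset]
  let V : Ω → Fin (2*n+1) → Fin (2*n+1) → ℝ × ℝ × (Fin d → ℝ) × (Fin d → ℝ) × ℝ :=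
    fun ω i j => (Y i ω, Y j ω, X i ω, X j ω, A ω i j)
  have hG := measurable_scoreOfArray (p := p) hζ hs
  have hAm : ∀ i j, Measurable fun ω => A ω i j := fun i j =>
    (measurable_pi_apply j).comp ((measurable_pi_apply i).comp hA)
  have hVσ : ∀ σ : Equiv.Perm (Fin (2*n+1)), Measurable fun ω => fun i j : Fin (2*n+1) =>
      (Y (σ i) ω, Y (σ j) ω, X (σ i) ω, X (σ j) ω, A ω (σ i) (σ j)) := fun σ =>
    measurable_pi_lambda _ fun i => measurable_pi_lambda _ fun j =>
      (hY _).prodMk ((hY _).prodMk ((hX _).prodMk ((hX _).prodMk (hAm _ _))))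
  have hV : Measurable V := hVσ 1
  have hScEq : ∀ ω j, Sc j ω = s (Y (scoreIdx n j) ω) (X (scoreIdx n j) ω)
      (Zhat (scoreIdx n j) ω) (fun i' : Fin n => (Y (trainIdx n i') ω, X (trainIdx n i') ω,
            Zhat (trainIdx n i') ω)) := by
    intro ω j
    refine Fin.lastCases ?_ (fun i => ?_) j
    · rw [(hSc ω).2, scoreIdx_last]
    · rw [(hSc ω).1 i, scoreIdx_castSucc]
  have hScV : ∀ ω, (fun j => Sc j ω) = scoreOfArray ζ s (V ω) := by
    intro ω
    funext j
    simp only [hScEq, scoreOfArray, V, hZhat]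
  have hE : ∀ j, MeasurableSet {ω | rankBelow (fun i => Sc i ω) j < k} := by
    intro j
    have := (hG.comp hV) (measurableSet_rankBelow_lt k j)
    convert this using 1
    ext ω
    simp [hScV]
  -- exchanging node `j` with the test node shows that all rank events are equally likely
  have hsame : ∀ j, μ {ω | rankBelow (fun i => Sc i ω) j < k}
      = μ {ω | rankBelow (fun i => Sc i ω) (Fin.last n) < k} := by
    intro j
    let σ : Equiv.Perm (Fin (2*n+1)) := Equiv.swap (scoreIdx n j) (scoreIdx n (Fin.last n))
    let τ : Equiv.Perm (Fin (n+1)) := Equiv.swap j (Fin.last n)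
    have hστ : ∀ i, σ (scoreIdx n i) = scoreIdx n (τ i) := fun i =>
      ((scoreIdx_injective n).map_swap j (Fin.last n) i).symm
    have hσt : ∀ i, σ (trainIdx n i) = trainIdx n i := fun i =>
      Equiv.swap_apply_of_ne_of_ne (trainIdx_ne_scoreIdx n i _) (trainIdx_ne_scoreIdx n i _)
    have hB := hG (measurableSet_rankBelow_lt k (Fin.last n))
    have h1 := congrArg (fun ν => ν ((scoreOfArray ζ s) ⁻¹'
      {f : Fin (n+1) → ℝ | rankBelow f (Fin.last n) < k})) (hexch σ)
    rw [Measure.map_apply (hVσ σ) hB, Measure.map_apply hV hB] at h1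
    have h2 : μ {ω | rankBelow (fun i => Sc i ω) (Fin.last n) < k}
        = μ (V ⁻¹' (scoreOfArray ζ s ⁻¹' {f | rankBelow f (Fin.last n) < k})) := by
      congr 1
      ext ω
      simp [hScV]
    rw [h2]
    refine Eq.trans (measure_congr ?_) h1
    filter_upwards [hequiv σ] with ω hω
    have hz : ∀ i, ζ (fun i j => A ω (σ i) (σ j)) (fun i => X (σ i) ω) i = Zhat (σ i) ω :=
      fun i => (congrFun hω i).symm
    have h3 : scoreOfArray ζ s (fun i j : Fin (2*n+1) =>
        (Y (σ i) ω, Y (σ j) ω, X (σ i) ω, X (σ j) ω, A ω (σ i) (σ j)))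
        = (fun i => Sc i ω) ∘ τ := by
      funext i
      simp only [scoreOfArray, hz, hστ, hσt, Function.comp, hScEq]
    apply propext
    change rankBelow (fun i => Sc i ω) j < k ↔ rankBelow (scoreOfArray ζ s (fun i j =>
      (Y (σ i) ω, Y (σ j) ω, X (σ i) ω, X (σ j) ω, A ω (σ i) (σ j)))) (Fin.last n) < k
    rw [h3, rankBelow_comp_perm]
    simp [τ]
  -- almost surely exactly `k` of the rank events occur
  have hsum : ∑ j, μ {ω | rankBelow (fun i => Sc i ω) j < k} = k := by
    calc ∑ j, μ {ω | rankBelow (fun i => Sc i ω) j < k}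
        = ∑ j, ∫⁻ ω, {ω | rankBelow (fun i => Sc i ω) j < k}.indicator 1 ω ∂μ := by
          simp only [lintegral_indicator_one (hE _)]
      _ = ∫⁻ ω, ∑ j, {ω | rankBelow (fun i => Sc i ω) j < k}.indicator 1 ω ∂μ :=
          (lintegral_finsetSum _ fun j _ => measurable_one.indicator (hE j)).symm
      _ = ∫⁻ _, (k : ENNReal) ∂μ := by
          refine lintegral_congr_ae ?_
          filter_upwards [hdistinct] with ω hω
          have hinj : Function.Injective fun j => Sc j ω := fun a b hab => by
            by_contra hne
            exact hω a b hne hab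
          have hc := card_rank_lt hinj hkn
          simp only [Set.indicator_apply, Set.mem_ofPred_eq, Pi.one_apply]
          rw [Finset.sum_boole, hc]
      _ = k := by simp
  simp only [hsame, Finset.sum_const, Finset.card_univ, Fintype.card_fin, nsmul_eq_mul] at hsum
  have hP : μ {ω | rankBelow (fun i => Sc i ω) (Fin.last n) < k}
      = ENNReal.ofReal (k / (n + 1)) := by
    rw [ENNReal.ofReal_div_of_pos hn1, ENNReal.ofReal_natCast]
    have : ENNReal.ofReal ((n : ℝ) + 1) = ((n + 1 : ℕ) : ENNReal) := by
      rw [← ENNReal.ofReal_natCast]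
      push_cast
      rfl
    rw [this, ENNReal.eq_div_iff (by simp) (by simp)]
    exact hsum
  rw [hP]
  constructor
  · refine ENNReal.ofReal_le_ofReal ?_
    rw [le_div_iff₀ hn1]
    exact Nat.le_ceil _
  · refine ENNReal.ofReal_le_ofReal ?_
    have := (Nat.ceil_lt_add_one (mul_pos hα1 hn1).le).le
    rw [div_le_iff₀ hn1, add_mul, one_div, inv_mul_cancel₀ hn1.ne']
    exact this
end
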